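/- Let α be an algebraic integer in ℚ(√2) such that N(α) = 2^k for some nonnegative integer k, α² is an integer multiple of a unit of ℤ[√2] (α is an algebraic d-number), α ≥ 2 and σ(α) ≥ 2, and N(α−1) divides T(α−1)² in ℤ (α−1 is an algebraic d-number). Then α is a rational integer, α ∈ ℤ. -/

import Mathlib

/-!
Write `T` and `N` for the trace and norm of `α`, so that `N(α - 1) = N + 1 - T` and
`(α - σ(α))² = T² - 4N`. If `α` is a d-number then `N ∣ T²`, hence `N ∣ (α - σ(α))²`; applied to
`α - 1`, which has the same difference of conjugates, this gives `N(α - 1) ∣ (α - σ(α))²`.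
Modulo `N` one has `N(α - 1) * (1 + T) ≡ 1 - T² ≡ 1`, so the two norms are coprime and
`N(α) * N(α - 1) ∣ (α - σ(α))²`. When both conjugates are at least the golden ratio, the left-hand
side is larger than the right-hand side, and `α = σ(α)` is the only possibility.
-/

open scoped goldenRatio

theorem isCoprime_add_one_sub_of_dvd_sq {R : Type*} [CommRing R] {n t : R} (h : n ∣ t ^ 2) :
    IsCoprime n (n + 1 - t) := by
  obtain ⟨c, hc⟩ := h
  exact ⟨c - 1 - t, 1 + t, by linear_combination -hc⟩

theorem mul_add_one_sub_dvd_sq_sub_four_mul {R : Type*} [CommRing R] {n t : R}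
    (h : n ∣ t ^ 2) (h' : n + 1 - t ∣ (t - 2) ^ 2) :
    n * (n + 1 - t) ∣ t ^ 2 - 4 * n := by
  have hdisc : t ^ 2 - 4 * n = (t - 2) ^ 2 - 4 * (n + 1 - t) := by ring
  refine (isCoprime_add_one_sub_of_dvd_sq h).mul_dvd (h.sub (dvd_mul_left n 4)) ?_
  rw [hdisc]
  exact h'.sub (dvd_mul_left _ 4)

theorem one_le_mul_sub_one_of_goldenRatio_le {x : ℝ} (hx : φ ≤ x) : 1 ≤ x * (x - 1) := by
  calc 1 = φ * (φ - 1) := by linear_combination -Real.goldenRatio_sq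
    _ ≤ x * (x - 1) :=
      mul_le_mul hx (sub_le_sub_right hx 1) (sub_nonneg.2 Real.one_lt_goldenRatio.le)
        (Real.goldenRatio_pos.le.trans hx)

theorem sub_sq_lt_mul_sub_one_mul_mul_sub_one {x y : ℝ} (hx : φ ≤ x) (hy : φ ≤ y) :
    (x - y) ^ 2 < x * (x - 1) * (y * (y - 1)) := by
  wlog hyx : y ≤ x generalizing x y
  · rw [sub_sq_comm, mul_comm]
    exact this hy hx (le_of_not_ge hyx)
  have hx1 : 1 ≤ x * (x - 1) := one_le_mul_sub_one_of_goldenRatio_le hx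
  have hy1 : 1 ≤ y * (y - 1) := one_le_mul_sub_one_of_goldenRatio_le hy
  have hgap : 0 ≤ (x - y) * (2 * y - 1) :=
    mul_nonneg (sub_nonneg.2 hyx) (by linarith [Real.one_lt_goldenRatio])
  calc (x - y) ^ 2 = x * (x - 1) - (x - y) * (2 * y - 1) - y * (y - 1) := by ring
    _ < x * (x - 1) := by linarith
    _ ≤ x * (x - 1) * (y * (y - 1)) := le_mul_of_one_le_right (by linarith) hy1

theorem eq_of_goldenRatio_le_of_dvd {x y : ℝ} {t n : ℤ} (hx : φ ≤ x) (hy : φ ≤ y)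
    (ht : (t : ℝ) = x + y) (hn : (n : ℝ) = x * y)
    (h : n ∣ t ^ 2) (h' : n + 1 - t ∣ (t - 2) ^ 2) : x = y := by
  have hdisc : ((t ^ 2 - 4 * n : ℤ) : ℝ) = (x - y) ^ 2 := by
    push_cast [ht, hn]
    ring
  have hprod : ((n * (n + 1 - t) : ℤ) : ℝ) = x * (x - 1) * (y * (y - 1)) := by
    push_cast [ht, hn]
    ring
  have hnonneg : 0 ≤ t ^ 2 - 4 * n := by
    rw [← Int.cast_nonneg_iff (R := ℝ), hdisc]
    exact sq_nonneg _
  have hlt : t ^ 2 - 4 * n < n * (n + 1 - t) := by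
    rw [← Int.cast_lt (R := ℝ), hdisc, hprod]
    exact sub_sq_lt_mul_sub_one_mul_mul_sub_one hx hy
  have hzero : t ^ 2 - 4 * n = 0 :=
    Int.eq_zero_of_dvd_of_nonneg_of_lt hnonneg hlt (mul_add_one_sub_dvd_sq_sub_four_mul h h')
  rw [hzero, Int.cast_zero] at hdisc
  exact sub_eq_zero.1 (sq_eq_zero_iff.1 hdisc.symm)

/-- Algebraic d-numbers of `ℤ[√d]`, by the criterion that the norm divides the square of the trace;
the trace of `α` is `2 * α.re`. Rational integers are included. If `ℤ[√d]` is not integrally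
closed, the criterion can be weaker than `α ^ 2` being an integer multiple of a unit of `ℤ[√d]`, as
`1 + √5` shows. -/
def IsDNumber {d : ℤ} (α : ℤ√d) : Prop :=
  α.norm ∣ (2 * α.re) ^ 2

theorem isDNumber_of_norm_dvd_sq {d : ℤ} {α : ℤ√d} (h : (α.norm : ℤ√d) ∣ α ^ 2) :
    IsDNumber α := by
  have hre : α.norm ∣ (α ^ 2).re := ((Zsqrtd.intCast_dvd _ _).1 h).1
  have htrace : (2 * α.re) ^ 2 = 2 * ((α ^ 2).re + α.norm) := by
    simp only [sq, Zsqrtd.re_mul, Zsqrtd.norm_def]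
    ring
  rw [IsDNumber, htrace]
  exact (hre.add dvd_rfl).mul_left 2

theorem isDNumber_of_sq_eq_intCast_mul_unit {d m : ℤ} {α : ℤ√d} {u : (ℤ√d)ˣ}
    (h : α ^ 2 = m * u) : IsDNumber α := by
  have hu : IsUnit (u : ℤ√d).norm := (Zsqrtd.isUnit_iff_norm_isUnit _).1 u.isUnit
  have hnorm : α.norm ^ 2 = m ^ 2 * (u : ℤ√d).norm := by
    rw [sq, ← Zsqrtd.norm_mul, ← sq, h, Zsqrtd.norm_mul, Zsqrtd.norm_intCast, sq]
  have hdvd : α.norm ∣ m := by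
    rw [← Int.pow_dvd_pow_iff two_ne_zero, hnorm, hu.mul_right_dvd]
  refine isDNumber_of_norm_dvd_sq ?_
  rw [h]
  exact ((Zsqrtd.intCast_dvd_intCast _ _).2 hdvd).mul_right _

theorem zsqrtd_norm_sub_one {d : ℤ} (α : ℤ√d) : (α - 1).norm = α.norm + 1 - 2 * α.re := by
  simp only [Zsqrtd.norm_def, Zsqrtd.re_sub, Zsqrtd.im_sub, Zsqrtd.re_one, Zsqrtd.im_one]
  ring

theorem zsqrtd_norm_eq_mul_of_nonneg {d : ℤ} (hd : 0 ≤ d) (α : ℤ√d) :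
    (α.norm : ℝ) = (α.re + α.im * √(d : ℝ)) * (α.re - α.im * √(d : ℝ)) := by
  have hsqrt : √(d : ℝ) ^ 2 = d := Real.sq_sqrt (Int.cast_nonneg hd)
  rw [Zsqrtd.norm_def]
  push_cast
  linear_combination (α.im : ℝ) ^ 2 * hsqrt

theorem stmt13_general {d : ℤ} (hd : 0 < d) {α : ℤ√d}
    (hα : IsDNumber α) (hα' : IsDNumber (α - 1))
    (h1 : φ ≤ (α.re : ℝ) + (α.im : ℝ) * √(d : ℝ))
    (h2 : φ ≤ (α.re : ℝ) - (α.im : ℝ) * √(d : ℝ)) :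
    α.im = 0 := by
  have htrace : ((2 * α.re : ℤ) : ℝ) =
      (α.re + α.im * √(d : ℝ)) + (α.re - α.im * √(d : ℝ)) := by
    push_cast
    ring
  have hdvd : α.norm + 1 - 2 * α.re ∣ (2 * α.re - 2) ^ 2 := by
    rw [← zsqrtd_norm_sub_one, ← mul_sub_one]
    exact hα'
  have hconj : (α.re : ℝ) + α.im * √(d : ℝ) = α.re - α.im * √(d : ℝ) :=
    eq_of_goldenRatio_le_of_dvd h1 h2 htrace (zsqrtd_norm_eq_mul_of_nonneg hd.le α) hα hdvd
  have him : (α.im : ℝ) * √(d : ℝ) = 0 := by linarith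
  have hsqrt : √(d : ℝ) ≠ 0 := (Real.sqrt_pos.2 (Int.cast_pos.2 hd)).ne'
  exact Int.cast_eq_zero.1 ((mul_eq_zero_iff_right hsqrt).1 him)

/-- Let `α = α.re + α.im·√2` be an algebraic integer in `ℚ(√2)` (an element of `ℤ[√2]`)
whose norm is a power of `2`, such that `α²` is an integer multiple of a unit of `ℤ[√2]`
(i.e. `α` is an algebraic d-number), both `α` and its conjugate `σ(α)` are at least `2`
under the real embedding, and `N(α−1)` divides `T(α−1)²` in `ℤ` (i.e. `α − 1` is an
algebraic d-number).  Then `α` is a rational integer. -/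
theorem stmt13 (α : ℤ√2)
    (hnorm : ∃ k : ℕ, α.norm = 2 ^ k)
    (hdnum : ∃ (m : ℤ) (u : (ℤ√2)ˣ), α ^ 2 = (m : ℤ√2) * (u : ℤ√2))
    (h1 : (2 : ℝ) ≤ (α.re : ℝ) + (α.im : ℝ) * Real.sqrt 2)
    (h2 : (2 : ℝ) ≤ (α.re : ℝ) - (α.im : ℝ) * Real.sqrt 2)
    (hdvd : (α - 1).norm ∣ (2 * (α - 1).re) ^ 2) :
    α.im = 0 := by
  obtain ⟨m, u, hu⟩ := hdnum
  exact stmt13_general two_pos (isDNumber_of_sq_eq_intCast_mul_unit hu) hdvd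
    (Real.goldenRatio_lt_two.le.trans (mod_cast h1))
    (Real.goldenRatio_lt_two.le.trans (mod_cast h2))
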